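/- Let -1/2 < s₀ ≤ 0, let p ≥ 2 be real, and let s satisfy max(-1/2, -1/6 - s₀ - 1/p) < s ≤ 0. Then there exists b₂ > 1/2 such that for every b with 1/2 < b < b₂ there is a constant C > 0 with the following property: for every sequence a : ℤ → ℂ with ∑_{m∈ℤ} ⟨m⟩^{s₀p} |a_m|^p < ∞, every k ∈ ℤ and every τ ∈ ℝ, one has ∑_{(n,m)∈ℤ²} ⟨n⟩^{2s} ⟨n+m⟩^{-2s} |a_m|² ⟨-τ + (n+k)² + n²⟩^{-2(1-b)} ⟨τ - (n+k)² + m² + (n+m)²⟩^{-2b} ≤ C (∑_{m∈ℤ} ⟨m⟩^{s₀p} |a_m|^p)^{2/p}. -/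

import Mathlib

/-- The Japanese bracket `⟨x⟩ = (1 + x²)^{1/2}`. -/
noncomputable def jb (x : ℝ) : ℝ := Real.sqrt (1 + x ^ 2)

/-!
The two modulations `-τ + (n+k)² + n²` and `τ - (n+k)² + m² + (n+m)²` add up to
`n² + m² + (n+m)²`, so the larger one controls the size `R` of the frequencies and can be traded for
a power of `R`. For fixed `m` the bracket that is left over is summable in `n`: it contains a
quadratic polynomial in `n`, or the linear polynomial of slope `2(m-k)`. What remains of the weights
is a negative power of `⟨m⟩`, and the sum over `m` is Hölder's inequality. The only exception is the
row `m = k`, where the linear polynomial is constant; there the powers of `R` give the summability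
in `n`, and the row contributes a single `|a_k|²`.
-/

section Rpow

lemma rpow_neg_le_mul_rpow_neg {x y c r : ℝ} (hx : 0 < x) (hc : 0 < c) (hr : 0 ≤ r)
    (h : x ≤ c * y) : y ^ (-r) ≤ c ^ r * x ^ (-r) := by
  have hxy : x / c ≤ y := (div_le_iff₀' hc).2 h
  calc y ^ (-r) ≤ (x / c) ^ (-r) :=
        Real.rpow_le_rpow_of_nonpos (div_pos hx hc) hxy (neg_nonpos.2 hr)
    _ = c ^ r * x ^ (-r) := by
        rw [Real.div_rpow hx.le hc.le, Real.rpow_neg hc.le, div_inv_eq_mul, mul_comm]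

lemma rpow_mul_rpow_neg_le_rpow_abs {x y R : ℝ} (r : ℝ) (hx : 1 ≤ x) (hy : 1 ≤ y)
    (hxR : x ≤ R) (hyR : y ≤ R) : x ^ r * y ^ (-r) ≤ R ^ |r| := by
  have hR : 0 ≤ R ^ |r| := Real.rpow_nonneg (by linarith) _
  rcases le_total 0 r with hr | hr
  · rw [abs_of_nonneg hr] at hR ⊢
    calc x ^ r * y ^ (-r) ≤ R ^ r * 1 := by
          gcongr
          exact Real.rpow_le_one_of_one_le_of_nonpos hy (neg_nonpos.2 hr)
      _ = R ^ r := mul_one _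
  · rw [abs_of_nonpos hr] at hR ⊢
    calc x ^ r * y ^ (-r) ≤ 1 * R ^ (-r) := by
          gcongr
          · exact Real.rpow_le_one_of_one_le_of_nonpos hx hr
          · exact neg_nonneg.2 hr
      _ = R ^ (-r) := one_mul _

lemma rpow_mul_rpow_neg_mul_rpow_neg_le {x y R r κ : ℝ} (hx : 0 < x) (hy : 0 < y)
    (hxR : x ≤ R) (hyR : y ≤ R) (hr : 0 ≤ r) (hrκ : r ≤ κ) :
    x ^ r * y ^ (-r) * R ^ (-κ) ≤ y ^ (-κ) := by
  have hR : 0 < R := hx.trans_le hxR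
  calc x ^ r * y ^ (-r) * R ^ (-κ) ≤ R ^ r * y ^ (-r) * R ^ (-κ) := by gcongr
    _ = y ^ (-r) * R ^ (r - κ) := by rw [sub_eq_add_neg, Real.rpow_add hR]; ring
    _ ≤ y ^ (-r) * y ^ (r - κ) := by
        gcongr y ^ (-r) * ?_
        exact Real.rpow_le_rpow_of_nonpos hy hyR (by linarith)
    _ = y ^ (-κ) := by rw [← Real.rpow_add hy]; ring_nf

lemma rpow_mul_rpow_neg_mul_rpow_neg_le_add {x y R r κ : ℝ} (hx : 0 < x) (hy : 0 < y)
    (hxR : x ≤ R) (hyR : y ≤ R) (hrκ : |r| ≤ κ) :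
    x ^ r * y ^ (-r) * R ^ (-κ) ≤ x ^ (-κ) + y ^ (-κ) := by
  obtain ⟨hr₁, hr₂⟩ := abs_le.1 hrκ
  rcases le_total 0 r with hr | hr
  · have h := rpow_mul_rpow_neg_mul_rpow_neg_le hx hy hxR hyR hr hr₂
    exact h.trans (le_add_of_nonneg_left (by positivity))
  · have h := rpow_mul_rpow_neg_mul_rpow_neg_le hy hx hyR hxR (neg_nonneg.2 hr)
      (neg_le.1 hr₁)
    rw [neg_neg, mul_comm (y ^ _)] at h
    exact h.trans (le_add_of_nonneg_right (by positivity))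

lemma rpow_neg_mul_rpow_neg_le_of_le_max {x y D c β γ : ℝ} (hx : 0 < x) (hy : 1 ≤ y)
    (hD : 0 < D) (hc : 0 < c) (hβ : 0 ≤ β) (hβγ : β ≤ γ) (h : D ≤ c * max x y) :
    x ^ (-β) * y ^ (-γ) ≤ c ^ β * D ^ (-β) * (x ^ (-β) + y ^ (-γ)) := by
  have hy₀ : 0 < y := one_pos.trans_le hy
  have hyγ : y ^ (-γ) ≤ y ^ (-β) := Real.rpow_le_rpow_of_exponent_le hy (neg_le_neg hβγ)
  rcases le_total x y with hxy | hxy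
  · rw [max_eq_right hxy] at h
    calc x ^ (-β) * y ^ (-γ) = y ^ (-γ) * x ^ (-β) := mul_comm _ _
      _ ≤ c ^ β * D ^ (-β) * (x ^ (-β) + y ^ (-γ)) := by
          gcongr
          · exact hyγ.trans (rpow_neg_le_mul_rpow_neg hD hc hβ h)
          · exact le_add_of_nonneg_right (by positivity)
  · rw [max_eq_left hxy] at h
    gcongr
    · exact rpow_neg_le_mul_rpow_neg hD hc hβ h
    · exact le_add_of_nonneg_left (by positivity)

end Rpow

section JapaneseBracket

lemma jb_sq (x : ℝ) : jb x ^ 2 = 1 + x ^ 2 := Real.sq_sqrt (by positivity)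

lemma one_le_jb (x : ℝ) : 1 ≤ jb x := Real.one_le_sqrt.2 (le_add_of_nonneg_right (sq_nonneg x))

lemma jb_pos (x : ℝ) : 0 < jb x := one_pos.trans_le (one_le_jb x)

lemma jb_rpow_nonneg (x r : ℝ) : 0 ≤ jb x ^ r := Real.rpow_nonneg (jb_pos x).le r

lemma abs_le_jb (x : ℝ) : |x| ≤ jb x := Real.abs_le_sqrt (le_add_of_nonneg_left zero_le_one)

lemma jb_neg (x : ℝ) : jb (-x) = jb x := by simp only [jb, neg_sq]

lemma jb_rpow_le_one (x : ℝ) {r : ℝ} (hr : r ≤ 0) : jb x ^ r ≤ 1 :=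
  Real.rpow_le_one_of_one_le_of_nonpos (one_le_jb x) hr

lemma jb_add_le_two_mul_jb {x y : ℝ} (hy : |y| ≤ 1) : jb (x + y) ≤ 2 * jb x := by
  have hy' : y ^ 2 ≤ 1 := (sq_le_one_iff_abs_le_one y).2 hy
  refine le_of_sq_le_sq ?_ (mul_nonneg zero_le_two (jb_pos x).le)
  rw [mul_pow, jb_sq, jb_sq]
  nlinarith [sq_nonneg (x - y)]

lemma jb_mul_rpow_neg_le {d r : ℝ} (x : ℝ) (hd : 1 ≤ |d|) (hr : 0 ≤ r) :
    jb (d * x) ^ (-r) ≤ jb x ^ (-r) := by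
  refine Real.rpow_le_rpow_of_nonpos (jb_pos x) (Real.sqrt_le_sqrt ?_) (neg_nonpos.2 hr)
  rw [mul_pow]
  gcongr
  exact le_mul_of_one_le_left (sq_nonneg x) ((one_le_sq_iff_one_le_abs d).2 hd)

lemma summable_jb_rpow_neg {γ : ℝ} (hγ : 1 < γ) : Summable fun n : ℤ ↦ jb n ^ (-γ) := by
  refine (Real.summable_abs_int_rpow hγ).of_norm_bounded_eventually ?_
  filter_upwards [(Set.finite_singleton (0 : ℤ)).compl_mem_cofinite] with n hn
  rw [Real.norm_of_nonneg (jb_rpow_nonneg _ _)]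
  exact Real.rpow_le_rpow_of_nonpos (abs_pos.2 (Int.cast_ne_zero.2 hn)) (abs_le_jb n)
    (by linarith)

lemma exists_sum_jb_add_rpow_neg_le {γ : ℝ} (hγ : 1 < γ) :
    ∃ C : ℝ, 0 < C ∧ ∀ (y : ℝ) (S : Finset ℤ), ∑ n ∈ S, jb (n + y) ^ (-γ) ≤ C := by
  have hs := summable_jb_rpow_neg hγ
  have hpos : 0 < ∑' n : ℤ, jb n ^ (-γ) :=
    hs.tsum_pos (fun n ↦ jb_rpow_nonneg n _) 0 (Real.rpow_pos_of_pos (jb_pos _) _)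
  refine ⟨2 ^ γ * ∑' n : ℤ, jb n ^ (-γ), by positivity, fun y S ↦ ?_⟩
  have hfloor (n : ℤ) : jb (n + y) ^ (-γ) ≤ 2 ^ γ * jb ((n + ⌊y⌋ : ℤ) : ℝ) ^ (-γ) := by
    refine rpow_neg_le_mul_rpow_neg (jb_pos _) two_pos (by linarith) ?_
    have hfract : |-Int.fract y| ≤ 1 := by
      rw [abs_neg, abs_of_nonneg (Int.fract_nonneg y)]
      exact (Int.fract_lt_one y).le
    convert jb_add_le_two_mul_jb (x := n + y) hfract using 2
    rw [Int.cast_add, Int.fract]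
    ring
  calc ∑ n ∈ S, jb (n + y) ^ (-γ) ≤ ∑ n ∈ S, 2 ^ γ * jb ((n + ⌊y⌋ : ℤ) : ℝ) ^ (-γ) :=
        Finset.sum_le_sum fun n _ ↦ hfloor n
    _ = 2 ^ γ * ∑ n ∈ S, jb ((n + ⌊y⌋ : ℤ) : ℝ) ^ (-γ) := (Finset.mul_sum _ _ _).symm
    _ ≤ 2 ^ γ * ∑' n : ℤ, jb ((n + ⌊y⌋ : ℤ) : ℝ) ^ (-γ) := by
        gcongr
        exact ((Equiv.addRight ⌊y⌋).summable_iff.2 hs).sum_le_tsum S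
          fun n _ ↦ jb_rpow_nonneg _ _
    _ = 2 ^ γ * ∑' n : ℤ, jb n ^ (-γ) := by
        rw [← (Equiv.addRight ⌊y⌋).tsum_eq fun n : ℤ ↦ jb n ^ (-γ)]
        rfl

lemma sq_abs_sub_sqrt_le (x u : ℝ) : (|x| - √u) ^ 2 ≤ |x ^ 2 - u| := by
  have hx := abs_nonneg x
  have ht := Real.sqrt_nonneg u
  rcases le_total 0 u with hu | hu
  · calc (|x| - √u) ^ 2 = |(|x| - √u)| * |(|x| - √u)| := by rw [← sq, sq_abs]
      _ ≤ |(|x| - √u)| * (|x| + √u) := by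
          gcongr
          exact abs_le.2 ⟨by linarith, by linarith⟩
      _ = |x ^ 2 - u| := by
          rw [← abs_of_nonneg (add_nonneg hx ht), ← abs_mul, mul_comm, ← sq_sub_sq, sq_abs,
            Real.sq_sqrt hu]
  · rw [Real.sqrt_eq_zero_of_nonpos hu, sub_zero, sq_abs]
    exact (le_sub_self_iff _).2 hu |>.trans (le_abs_self _)

lemma jb_sq_sub_rpow_neg_le {β : ℝ} (hβ : 0 ≤ β) (x u : ℝ) :
    jb (x ^ 2 - u) ^ (-β) ≤
      2 ^ β * (jb (x - √u) ^ (-(2 * β)) + jb (x + √u) ^ (-(2 * β))) := by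
  have hroot : jb (|x| - √u) ^ 2 ≤ 2 * jb (x ^ 2 - u) := by
    rw [jb_sq]
    linarith [sq_abs_sub_sqrt_le x u, abs_le_jb (x ^ 2 - u), one_le_jb (x ^ 2 - u)]
  calc jb (x ^ 2 - u) ^ (-β) ≤ 2 ^ β * (jb (|x| - √u) ^ 2) ^ (-β) :=
        rpow_neg_le_mul_rpow_neg (pow_pos (jb_pos _) 2) two_pos hβ hroot
    _ = 2 ^ β * jb (|x| - √u) ^ (-(2 * β)) := by
        rw [← Real.rpow_natCast_mul (jb_pos _).le, Nat.cast_ofNat, mul_neg]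
    _ ≤ 2 ^ β * (jb (x - √u) ^ (-(2 * β)) + jb (x + √u) ^ (-(2 * β))) := by
        gcongr
        rcases abs_choice x with hx | hx <;> rw [hx]
        · exact le_add_of_nonneg_right (jb_rpow_nonneg _ _)
        · rw [← neg_add', jb_neg]
          exact le_add_of_nonneg_left (jb_rpow_nonneg _ _)

lemma exists_sum_jb_sq_sub_rpow_neg_le {β : ℝ} (hβ : 1 / 2 < β) :
    ∃ C : ℝ, 0 < C ∧ ∀ (h u : ℝ) (S : Finset ℤ),
      ∑ n ∈ S, jb ((n + h) ^ 2 - u) ^ (-β) ≤ C := by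
  obtain ⟨C, hC, hsum⟩ := exists_sum_jb_add_rpow_neg_le (show 1 < 2 * β by linarith)
  refine ⟨2 ^ β * (C + C), by positivity, fun h u S ↦ ?_⟩
  calc ∑ n ∈ S, jb ((n + h) ^ 2 - u) ^ (-β)
      ≤ ∑ n ∈ S, 2 ^ β * (jb (n + (h - √u)) ^ (-(2 * β)) + jb (n + (h + √u)) ^ (-(2 * β))) := by
        gcongr with n
        rw [← add_sub_assoc, ← add_assoc]
        exact jb_sq_sub_rpow_neg_le (by linarith) _ u
    _ = 2 ^ β * (∑ n ∈ S, jb (n + (h - √u)) ^ (-(2 * β)) +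
          ∑ n ∈ S, jb (n + (h + √u)) ^ (-(2 * β))) := by
        rw [← Finset.mul_sum, Finset.sum_add_distrib]
    _ ≤ 2 ^ β * (C + C) := by
        gcongr
        · exact hsum _ S
        · exact hsum _ S

end JapaneseBracket

section SequenceNorms

variable {ι : Type*} {c : ι → ℝ} {p q : ℝ}

lemma rpow_le_tsum_rpow (hp : 0 < p) (hq : 0 ≤ q) (hc : ∀ i, 0 ≤ c i)
    (hs : Summable fun i ↦ c i ^ p) (i : ι) : c i ^ q ≤ (∑' j, c j ^ p) ^ (q / p) :=
  calc c i ^ q = (c i ^ p) ^ (q / p) := by rw [← Real.rpow_mul (hc i), mul_div_cancel₀ _ hp.ne']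
    _ ≤ (∑' j, c j ^ p) ^ (q / p) := by
        have hi := Real.rpow_nonneg (hc i) p
        gcongr
        exact hs.le_tsum i fun j _ ↦ Real.rpow_nonneg (hc j) p

lemma sum_rpow_le_tsum_rpow (hp : 0 < p) (hpq : p ≤ q) (hc : ∀ i, 0 ≤ c i)
    (hs : Summable fun i ↦ c i ^ p) (T : Finset ι) :
    ∑ i ∈ T, c i ^ q ≤ (∑' i, c i ^ p) ^ (q / p) := by
  have hcp (i : ι) : 0 ≤ c i ^ p := Real.rpow_nonneg (hc i) p
  have hN : 0 ≤ ∑' i, c i ^ p := tsum_nonneg hcp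
  have hqp : 0 ≤ q - p := sub_nonneg.2 hpq
  calc ∑ i ∈ T, c i ^ q = ∑ i ∈ T, c i ^ p * c i ^ (q - p) :=
        Finset.sum_congr rfl fun i _ ↦ by
          rw [← Real.rpow_add_of_nonneg (hc i) hp.le hqp, add_sub_cancel]
    _ ≤ ∑ i ∈ T, c i ^ p * (∑' j, c j ^ p) ^ ((q - p) / p) := by
        gcongr with i
        · exact hcp i
        · exact rpow_le_tsum_rpow hp hqp hc hs i
    _ = (∑ i ∈ T, c i ^ p) * (∑' j, c j ^ p) ^ ((q - p) / p) := (Finset.sum_mul _ _ _).symm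
    _ ≤ (∑' i, c i ^ p) * (∑' j, c j ^ p) ^ ((q - p) / p) := by
        gcongr
        exact hs.sum_le_tsum T fun i _ ↦ hcp i
    _ = (∑' i, c i ^ p) ^ (q / p) := by
        nth_rw 1 [← Real.rpow_one (∑' i, c i ^ p)]
        rw [← Real.rpow_add_of_nonneg hN zero_le_one (by positivity), sub_div, div_self hp.ne',
          add_sub_cancel]

lemma sum_mul_rpow_le_tsum_rpow {w : ι → ℝ} (hq : 0 < q) (hqp : q < p) (hw : ∀ i, 0 ≤ w i)
    (hc : ∀ i, 0 ≤ c i) (hws : Summable fun i ↦ w i ^ (p / (p - q)))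
    (hs : Summable fun i ↦ c i ^ p) (T : Finset ι) :
    ∑ i ∈ T, w i * c i ^ q ≤
      (∑' i, w i ^ (p / (p - q))) ^ ((p - q) / p) * (∑' i, c i ^ p) ^ (q / p) := by
  have hp : 0 < p := hq.trans hqp
  have hpq : 0 < p - q := sub_pos.2 hqp
  have hconj : (p / (p - q)).HolderConjugate (p / q) := by
    rw [Real.holderConjugate_iff, one_lt_div hpq, inv_div, inv_div]
    exact ⟨by linarith, by field_simp; ring⟩
  have hcq (i : ι) : (c i ^ q) ^ (p / q) = c i ^ p := by
    rw [← Real.rpow_mul (hc i), mul_div_cancel₀ _ hq.ne']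
  have hcq_nonneg (i : ι) : 0 ≤ c i ^ q := Real.rpow_nonneg (hc i) q
  obtain ⟨hsum, hle⟩ := Real.summable_and_inner_le_Lp_mul_Lq_tsum_of_nonneg hconj hw hcq_nonneg
    hws (by simpa only [hcq] using hs)
  simp only [hcq, one_div_div] at hle
  exact (hsum.sum_le_tsum T fun i _ ↦ mul_nonneg (hw i) (hcq_nonneg i)).trans hle

lemma exists_sum_jb_rpow_neg_mul_sq_le {μ : ℝ} (hp : 0 < p) (hμ₀ : 0 ≤ μ)
    (hμ : 1 - 2 / p < μ) :
    ∃ C : ℝ, 0 < C ∧ ∀ c : ℤ → ℝ, (∀ m, 0 ≤ c m) → Summable (fun m ↦ c m ^ p) →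
      ∀ T : Finset ℤ, ∑ m ∈ T, jb m ^ (-μ) * c m ^ 2 ≤ C * (∑' m, c m ^ p) ^ (2 / p) := by
  rcases le_or_gt p 2 with hp2 | hp2
  · refine ⟨1, one_pos, fun c hc hs T ↦ ?_⟩
    calc ∑ m ∈ T, jb m ^ (-μ) * c m ^ 2 ≤ ∑ m ∈ T, c m ^ (2 : ℝ) := by
          gcongr with m
          rw [Real.rpow_two]
          exact mul_le_of_le_one_left (sq_nonneg _) (jb_rpow_le_one m (neg_nonpos.2 hμ₀))
      _ ≤ (∑' m, c m ^ p) ^ (2 / p) := sum_rpow_le_tsum_rpow hp hp2 hc hs T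
      _ = 1 * (∑' m, c m ^ p) ^ (2 / p) := (one_mul _).symm
  · have hexp : 1 < μ * (p / (p - 2)) := by
      rw [← mul_div_assoc, one_lt_div (sub_pos.2 hp2)]
      calc p - 2 = (1 - 2 / p) * p := by field_simp
        _ < μ * p := by gcongr
    have hw (m : ℤ) : (jb m ^ (-μ)) ^ (p / (p - 2)) = jb m ^ (-(μ * (p / (p - 2)))) := by
      rw [← Real.rpow_mul (jb_pos _).le, neg_mul]
    have hws : Summable fun m : ℤ ↦ (jb m ^ (-μ)) ^ (p / (p - 2)) := by
      simpa only [hw] using summable_jb_rpow_neg hexp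
    have hpos : 0 < ∑' m : ℤ, (jb m ^ (-μ)) ^ (p / (p - 2)) :=
      hws.tsum_pos (fun m ↦ Real.rpow_nonneg (jb_rpow_nonneg _ _) _) 0
        (Real.rpow_pos_of_pos (Real.rpow_pos_of_pos (jb_pos _) _) _)
    refine ⟨_, Real.rpow_pos_of_pos hpos ((p - 2) / p), fun c hc hs T ↦ ?_⟩
    simpa only [Real.rpow_two] using
      sum_mul_rpow_le_tsum_rpow two_pos hp2 (fun m : ℤ ↦ jb_rpow_nonneg m (-μ)) hc hws hs T

end SequenceNorms

section BilinearKernel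

/-- The modulation of the output frequency in the bilinear estimate (the argument of its bracket
with exponent `-2(1-b)`). -/
def outputModulation (k τ n : ℝ) : ℝ := -τ + (n + k) ^ 2 + n ^ 2

/-- The modulation of the input `v` in the bilinear estimate (the argument of its bracket with
exponent `-2b`). -/
def inputModulation (k τ n m : ℝ) : ℝ := τ - (n + k) ^ 2 + m ^ 2 + (n + m) ^ 2

/-- The size of the frequency triple `(n, m, n + m)`; its square is `1` plus the sum of the two
modulations, which no longer depends on `k` and `τ`. -/
noncomputable def frequencySize (n m : ℝ) : ℝ := √(1 + n ^ 2 + m ^ 2 + (n + m) ^ 2)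

/-- The kernel of the bilinear estimate with general exponents: the summand of the quantity
`I(k, τ)` without the factor `|a_m|²`, for `r = 2s`, `β = 2(1-b)` and `γ = 2b`. -/
noncomputable def bilinearKernel (r β γ k τ n m : ℝ) : ℝ :=
  jb n ^ r * jb (n + m) ^ (-r) * jb (outputModulation k τ n) ^ (-β) *
    jb (inputModulation k τ n m) ^ (-γ)

/-- The multiplier that remains of `bilinearKernel` once the larger of the two modulations has been
traded for `frequencySize n m ^ 2`. -/
noncomputable def resonantWeight (r β n m : ℝ) : ℝ :=
  jb n ^ r * jb (n + m) ^ (-r) * frequencySize n m ^ (-(2 * β))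

lemma outputModulation_eq (k τ n : ℝ) :
    outputModulation k τ n = 2 * ((n + k / 2) ^ 2 - (τ / 2 - k ^ 2 / 4)) := by
  unfold outputModulation
  ring

lemma inputModulation_eq {k m : ℝ} (hmk : m ≠ k) (τ n : ℝ) :
    inputModulation k τ n m =
      2 * (m - k) * (n + (2 * m ^ 2 + τ - k ^ 2) / (2 * (m - k))) := by
  have hsub : m - k ≠ 0 := sub_ne_zero.2 hmk
  unfold inputModulation
  field_simp
  ring

lemma jb_le_frequencySize_left (n m : ℝ) : jb n ≤ frequencySize n m :=
  Real.sqrt_le_sqrt (by nlinarith)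

lemma jb_le_frequencySize_right (n m : ℝ) : jb m ≤ frequencySize n m :=
  Real.sqrt_le_sqrt (by nlinarith)

lemma jb_add_le_frequencySize (n m : ℝ) : jb (n + m) ≤ frequencySize n m :=
  Real.sqrt_le_sqrt (by nlinarith)

lemma frequencySize_pos (n m : ℝ) : 0 < frequencySize n m :=
  (jb_pos n).trans_le (jb_le_frequencySize_left n m)

lemma frequencySize_sq_le (k τ n m : ℝ) :
    frequencySize n m ^ 2 ≤
      3 * max (jb (outputModulation k τ n)) (jb (inputModulation k τ n m)) := by
  set M := max (jb (outputModulation k τ n)) (jb (inputModulation k τ n m))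
  have hA : outputModulation k τ n ≤ M :=
    (le_abs_self _).trans ((abs_le_jb _).trans (le_max_left _ _))
  have hB : inputModulation k τ n m ≤ M :=
    (le_abs_self _).trans ((abs_le_jb _).trans (le_max_right _ _))
  have hM : 1 ≤ M := (one_le_jb _).trans (le_max_left _ _)
  calc frequencySize n m ^ 2 = 1 + n ^ 2 + m ^ 2 + (n + m) ^ 2 := Real.sq_sqrt (by positivity)
    _ = 1 + (outputModulation k τ n + inputModulation k τ n m) := by
        unfold outputModulation inputModulation
        ring
    _ ≤ 3 * M := by linarith

lemma bilinearKernel_nonneg (r β γ k τ n m : ℝ) : 0 ≤ bilinearKernel r β γ k τ n m :=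
  mul_nonneg (mul_nonneg (mul_nonneg (jb_rpow_nonneg _ _) (jb_rpow_nonneg _ _))
    (jb_rpow_nonneg _ _)) (jb_rpow_nonneg _ _)

lemma resonantWeight_nonneg (r β n m : ℝ) : 0 ≤ resonantWeight r β n m :=
  mul_nonneg (mul_nonneg (jb_rpow_nonneg _ _) (jb_rpow_nonneg _ _))
    (Real.rpow_nonneg (frequencySize_pos _ _).le _)

variable {r β γ κ : ℝ}

lemma bilinearKernel_le (hβ : 0 ≤ β) (hβγ : β ≤ γ) (k τ n m : ℝ) :
    bilinearKernel r β γ k τ n m ≤ 3 ^ β *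
      (resonantWeight r β n m * jb (outputModulation k τ n) ^ (-β) +
        resonantWeight r β n m * jb (inputModulation k τ n m) ^ (-γ)) := by
  set x := jb (outputModulation k τ n)
  set y := jb (inputModulation k τ n m)
  have hD : (frequencySize n m ^ 2) ^ (-β) = frequencySize n m ^ (-(2 * β)) := by
    rw [← Real.rpow_natCast_mul (frequencySize_pos n m).le, Nat.cast_ofNat, mul_neg]
  have hgain : x ^ (-β) * y ^ (-γ) ≤
      3 ^ β * (frequencySize n m ^ 2) ^ (-β) * (x ^ (-β) + y ^ (-γ)) :=
    rpow_neg_mul_rpow_neg_le_of_le_max (jb_pos _) (one_le_jb _)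
      (pow_pos (frequencySize_pos n m) 2) three_pos hβ hβγ (frequencySize_sq_le k τ n m)
  calc bilinearKernel r β γ k τ n m
      = jb n ^ r * jb (n + m) ^ (-r) * (x ^ (-β) * y ^ (-γ)) := mul_assoc _ _ _
    _ ≤ jb n ^ r * jb (n + m) ^ (-r) *
          (3 ^ β * (frequencySize n m ^ 2) ^ (-β) * (x ^ (-β) + y ^ (-γ))) :=
        mul_le_mul_of_nonneg_left hgain (mul_nonneg (jb_rpow_nonneg _ _) (jb_rpow_nonneg _ _))
    _ = 3 ^ β * (resonantWeight r β n m * x ^ (-β) + resonantWeight r β n m * y ^ (-γ)) := by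
        rw [hD, resonantWeight]
        ring

lemma resonantWeight_le (hr : |r| ≤ 2 * β) (n m : ℝ) :
    resonantWeight r β n m ≤ jb m ^ (-(2 * β - |r|)) := by
  have hR := frequencySize_pos n m
  calc resonantWeight r β n m ≤ frequencySize n m ^ |r| * frequencySize n m ^ (-(2 * β)) := by
        unfold resonantWeight
        gcongr
        exact rpow_mul_rpow_neg_le_rpow_abs r (one_le_jb _) (one_le_jb _)
          (jb_le_frequencySize_left n m) (jb_add_le_frequencySize n m)
    _ = frequencySize n m ^ (-(2 * β - |r|)) := by rw [← Real.rpow_add hR]; ring_nf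
    _ ≤ jb m ^ (-(2 * β - |r|)) :=
        Real.rpow_le_rpow_of_nonpos (jb_pos m) (jb_le_frequencySize_right n m) (by linarith)

lemma resonantWeight_le_mul_add (hr : |r| ≤ κ) (hκ : κ ≤ 2 * β) (n m : ℝ) :
    resonantWeight r β n m ≤
      jb m ^ (-(2 * β - κ)) * (jb n ^ (-κ) + jb (n + m) ^ (-κ)) := by
  have hR := frequencySize_pos n m
  calc resonantWeight r β n m
      = frequencySize n m ^ (-(2 * β - κ)) *
          (jb n ^ r * jb (n + m) ^ (-r) * frequencySize n m ^ (-κ)) := by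
        rw [resonantWeight, show -(2 * β) = -(2 * β - κ) + -κ by ring, Real.rpow_add hR]
        ring
    _ ≤ jb m ^ (-(2 * β - κ)) * (jb n ^ (-κ) + jb (n + m) ^ (-κ)) := by
        refine mul_le_mul ?_ ?_ ?_ (jb_rpow_nonneg _ _)
        · exact Real.rpow_le_rpow_of_nonpos (jb_pos m) (jb_le_frequencySize_right n m)
            (by linarith)
        · exact rpow_mul_rpow_neg_mul_rpow_neg_le_add (jb_pos _) (jb_pos _)
            (jb_le_frequencySize_left n m) (jb_add_le_frequencySize n m) hr
        · exact mul_nonneg (mul_nonneg (jb_rpow_nonneg _ _) (jb_rpow_nonneg _ _))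
            (Real.rpow_nonneg hR.le _)

lemma exists_sum_jb_outputModulation_rpow_neg_le (hβ : 1 / 2 < β) :
    ∃ C : ℝ, 0 < C ∧ ∀ (k τ : ℝ) (S : Finset ℤ),
      ∑ n ∈ S, jb (outputModulation k τ n) ^ (-β) ≤ C := by
  obtain ⟨C, hC, hsum⟩ := exists_sum_jb_sq_sub_rpow_neg_le hβ
  refine ⟨C, hC, fun k τ S ↦ (Finset.sum_le_sum fun n _ ↦ ?_).trans
    (hsum (k / 2) (τ / 2 - k ^ 2 / 4) S)⟩
  rw [outputModulation_eq]
  exact jb_mul_rpow_neg_le _ (by norm_num) (by linarith)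

lemma exists_sum_jb_inputModulation_rpow_neg_le (hγ : 1 < γ) :
    ∃ C : ℝ, 0 < C ∧ ∀ (k m : ℤ) (τ : ℝ) (S : Finset ℤ), m ≠ k →
      ∑ n ∈ S, jb (inputModulation k τ n m) ^ (-γ) ≤ C := by
  obtain ⟨C, hC, hsum⟩ := exists_sum_jb_add_rpow_neg_le hγ
  refine ⟨C, hC, fun k m τ S hmk ↦ (Finset.sum_le_sum fun n _ ↦ ?_).trans
    (hsum ((2 * m ^ 2 + τ - k ^ 2) / (2 * (m - k))) S)⟩
  have hslope : (1 : ℝ) ≤ |2 * ((m : ℝ) - k)| := by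
    have hone : (1 : ℝ) ≤ |(m : ℝ) - k| := by exact_mod_cast Int.one_le_abs (sub_ne_zero.2 hmk)
    rw [abs_mul, abs_two]
    linarith
  rw [inputModulation_eq (Int.cast_injective.ne hmk)]
  exact jb_mul_rpow_neg_le _ hslope (by linarith)

lemma exists_sum_resonantWeight_le (hκ : 1 < κ) (hr : |r| ≤ κ) (hκβ : κ ≤ 2 * β) :
    ∃ C : ℝ, 0 < C ∧ ∀ (m : ℝ) (S : Finset ℤ),
      ∑ n ∈ S, resonantWeight r β n m ≤ C * jb m ^ (-(2 * β - κ)) := by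
  obtain ⟨C, hC, hsum⟩ := exists_sum_jb_add_rpow_neg_le hκ
  refine ⟨C + C, by positivity, fun m S ↦ ?_⟩
  have hm := jb_rpow_nonneg m (-(2 * β - κ))
  calc ∑ n ∈ S, resonantWeight r β n m
      ≤ ∑ n ∈ S, jb m ^ (-(2 * β - κ)) * (jb (n + 0) ^ (-κ) + jb (n + m) ^ (-κ)) := by
        gcongr with n
        rw [add_zero]
        exact resonantWeight_le_mul_add hr hκβ n m
    _ = jb m ^ (-(2 * β - κ)) *
          (∑ n ∈ S, jb (n + 0) ^ (-κ) + ∑ n ∈ S, jb (n + m) ^ (-κ)) := by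
        rw [← Finset.mul_sum, Finset.sum_add_distrib]
    _ ≤ jb m ^ (-(2 * β - κ)) * (C + C) := by
        gcongr
        · exact hsum 0 S
        · exact hsum m S
    _ = (C + C) * jb m ^ (-(2 * β - κ)) := mul_comm _ _

lemma exists_sum_resonantWeight_mul_inputModulation_le (hγ : 1 < γ) (hκ : 1 < κ)
    (hr : |r| ≤ κ) (hκβ : κ ≤ 2 * β) :
    ∃ C : ℝ, 0 < C ∧ ∀ (k m : ℤ) (τ : ℝ) (S : Finset ℤ),
      ∑ n ∈ S, resonantWeight r β n m * jb (inputModulation k τ n m) ^ (-γ) ≤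
        C * (jb m ^ (-(2 * β - |r|)) + if m = k then jb m ^ (-(2 * β - κ)) else 0) := by
  obtain ⟨C₁, hC₁, hoff⟩ := exists_sum_jb_inputModulation_rpow_neg_le hγ
  obtain ⟨C₂, hC₂, hdiag⟩ := exists_sum_resonantWeight_le hκ hr hκβ
  refine ⟨C₁ + C₂, by positivity, fun k m τ S ↦ ?_⟩
  have hm := jb_rpow_nonneg m (-(2 * β - |r|))
  have hm' := jb_rpow_nonneg m (-(2 * β - κ))
  split_ifs with hmk
  -- For `m = k` the modulation does not depend on `n`, and only the weight provides decay.
  · calc ∑ n ∈ S, resonantWeight r β n m * jb (inputModulation k τ n m) ^ (-γ)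
        ≤ ∑ n ∈ S, resonantWeight r β n m := by
          gcongr with n
          exact mul_le_of_le_one_right (resonantWeight_nonneg _ _ _ _)
            (jb_rpow_le_one _ (by linarith))
      _ ≤ C₂ * jb m ^ (-(2 * β - κ)) := hdiag m S
      _ ≤ (C₁ + C₂) * (jb m ^ (-(2 * β - |r|)) + jb m ^ (-(2 * β - κ))) := by
          gcongr
          · exact le_add_of_nonneg_left hC₁.le
          · exact le_add_of_nonneg_left hm
  · calc ∑ n ∈ S, resonantWeight r β n m * jb (inputModulation k τ n m) ^ (-γ)
        ≤ ∑ n ∈ S, jb m ^ (-(2 * β - |r|)) * jb (inputModulation k τ n m) ^ (-γ) := by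
          gcongr with n
          · exact jb_rpow_nonneg _ _
          · exact resonantWeight_le (hr.trans hκβ) n m
      _ = jb m ^ (-(2 * β - |r|)) * ∑ n ∈ S, jb (inputModulation k τ n m) ^ (-γ) :=
          (Finset.mul_sum _ _ _).symm
      _ ≤ jb m ^ (-(2 * β - |r|)) * (C₁ + C₂) := by
          gcongr
          exact (hoff k m τ S hmk).trans (le_add_of_nonneg_right hC₂.le)
      _ = (C₁ + C₂) * (jb m ^ (-(2 * β - |r|)) + 0) := by rw [add_zero, mul_comm]

lemma exists_sum_bilinearKernel_le (hβγ : β ≤ γ) (hγ : 1 < γ) (hκ : 1 < κ) (hr : |r| ≤ κ)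
    (hκβ : κ ≤ 2 * β) :
    ∃ C : ℝ, 0 < C ∧ ∀ (k m : ℤ) (τ : ℝ) (S : Finset ℤ),
      ∑ n ∈ S, bilinearKernel r β γ k τ n m ≤
        C * (jb m ^ (-(2 * β - |r|)) + if m = k then jb m ^ (-(2 * β - κ)) else 0) := by
  obtain ⟨C₁, hC₁, hout⟩ :=
    exists_sum_jb_outputModulation_rpow_neg_le (show 1 / 2 < β by linarith)
  obtain ⟨C₂, hC₂, hin⟩ := exists_sum_resonantWeight_mul_inputModulation_le hγ hκ hr hκβ
  refine ⟨3 ^ β * (C₁ + C₂), by positivity, fun k m τ S ↦ ?_⟩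
  have hm := jb_rpow_nonneg m (-(2 * β - |r|))
  have hout' : ∑ n ∈ S, resonantWeight r β n m * jb (outputModulation k τ n) ^ (-β) ≤
      C₁ * jb m ^ (-(2 * β - |r|)) := by
    rw [mul_comm C₁]
    refine le_trans ?_ (mul_le_mul_of_nonneg_left (hout k τ S) hm)
    rw [Finset.mul_sum]
    gcongr with n
    · exact jb_rpow_nonneg _ _
    · exact resonantWeight_le (hr.trans hκβ) n m
  have hdiag : 0 ≤ if m = k then jb m ^ (-(2 * β - κ)) else 0 := by
    split_ifs
    exacts [jb_rpow_nonneg _ _, le_rfl]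
  calc ∑ n ∈ S, bilinearKernel r β γ k τ n m
      ≤ ∑ n ∈ S, 3 ^ β * (resonantWeight r β n m * jb (outputModulation k τ n) ^ (-β) +
          resonantWeight r β n m * jb (inputModulation k τ n m) ^ (-γ)) :=
        Finset.sum_le_sum fun n _ ↦ bilinearKernel_le (by linarith) hβγ k τ n m
    _ = 3 ^ β * (∑ n ∈ S, resonantWeight r β n m * jb (outputModulation k τ n) ^ (-β) +
          ∑ n ∈ S, resonantWeight r β n m * jb (inputModulation k τ n m) ^ (-γ)) := by
        rw [← Finset.mul_sum, Finset.sum_add_distrib]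
    _ ≤ 3 ^ β * (C₁ * (jb m ^ (-(2 * β - |r|)) + if m = k then jb m ^ (-(2 * β - κ)) else 0) +
          C₂ * (jb m ^ (-(2 * β - |r|)) + if m = k then jb m ^ (-(2 * β - κ)) else 0)) := by
        gcongr
        · exact hout'.trans (by gcongr; exact le_add_of_nonneg_right hdiag)
        · exact hin k m τ S
    _ = _ := by ring

end BilinearKernel

section BilinearEstimate

lemma summable_and_tsum_le_of_sum_sum_le {ι ι' : Type*} {f : ι × ι' → ℝ} {M : ℝ}
    (hf : ∀ x, 0 ≤ f x) (h : ∀ (S : Finset ι) (T : Finset ι'), ∑ m ∈ T, ∑ n ∈ S, f (n, m) ≤ M) :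
    Summable f ∧ ∑' x, f x ≤ M := by
  classical
  have hle (u : Finset (ι × ι')) : ∑ x ∈ u, f x ≤ M :=
    calc ∑ x ∈ u, f x ≤ ∑ x ∈ u.image Prod.fst ×ˢ u.image Prod.snd, f x :=
          Finset.sum_le_sum_of_subset_of_nonneg Finset.subset_product fun x _ _ ↦ hf x
      _ = ∑ m ∈ u.image Prod.snd, ∑ n ∈ u.image Prod.fst, f (n, m) :=
          Finset.sum_product_right _ _ _
      _ ≤ M := h _ _
  exact ⟨summable_of_sum_le hf hle, Real.tsum_le_of_sum_le hf hle⟩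

lemma jb_rpow_neg_mul_sq (s₀ ν x t : ℝ) :
    jb x ^ (-ν) * t ^ 2 = jb x ^ (-(ν + 2 * s₀)) * (jb x ^ s₀ * t) ^ 2 := by
  rw [mul_pow, ← Real.rpow_mul_natCast (jb_pos x).le, ← mul_assoc, ← Real.rpow_add (jb_pos x),
    Nat.cast_ofNat]
  ring_nf

variable {E : Type*} [SeminormedAddCommGroup E] {p s₀ : ℝ}

lemma exists_sum_jb_rpow_neg_add_ite_mul_norm_sq_le {μ ν : ℝ} (hp : 0 < p)
    (hμ₀ : 0 ≤ μ + 2 * s₀) (hμ : 1 - 2 / p < μ + 2 * s₀) (hν : 0 ≤ ν + 2 * s₀) :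
    ∃ C : ℝ, 0 < C ∧ ∀ a : ℤ → E, Summable (fun m : ℤ ↦ jb m ^ (s₀ * p) * ‖a m‖ ^ p) →
      ∀ (k : ℤ) (T : Finset ℤ),
        ∑ m ∈ T, (jb m ^ (-μ) + if m = k then jb m ^ (-ν) else 0) * ‖a m‖ ^ 2 ≤
          C * (∑' m : ℤ, jb m ^ (s₀ * p) * ‖a m‖ ^ p) ^ (2 / p) := by
  obtain ⟨C, hC, hsum⟩ := exists_sum_jb_rpow_neg_mul_sq_le hp hμ₀ hμ
  refine ⟨C + 1, by positivity, fun a ha k T ↦ ?_⟩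
  set c : ℤ → ℝ := fun m ↦ jb m ^ s₀ * ‖a m‖ with hc
  have hc₀ (m : ℤ) : 0 ≤ c m := mul_nonneg (jb_rpow_nonneg _ _) (norm_nonneg _)
  have hcp (m : ℤ) : jb m ^ (s₀ * p) * ‖a m‖ ^ p = c m ^ p := by
    rw [hc, Real.mul_rpow (jb_rpow_nonneg _ _) (norm_nonneg _), Real.rpow_mul (jb_pos _).le]
  simp only [hcp] at ha ⊢
  set N := (∑' m, c m ^ p) ^ (2 / p)
  have hN : 0 ≤ N := Real.rpow_nonneg (tsum_nonneg fun m ↦ Real.rpow_nonneg (hc₀ m) p) _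
  have hdiag : ∑ m ∈ T, (if m = k then jb m ^ (-ν) else 0) * ‖a m‖ ^ 2 ≤ N := by
    simp only [ite_mul, zero_mul, Finset.sum_ite_eq']
    split_ifs
    · calc jb k ^ (-ν) * ‖a k‖ ^ 2 = jb k ^ (-(ν + 2 * s₀)) * c k ^ 2 :=
            jb_rpow_neg_mul_sq s₀ ν k _
        _ ≤ c k ^ 2 :=
            mul_le_of_le_one_left (sq_nonneg _) (jb_rpow_le_one _ (neg_nonpos.2 hν))
        _ ≤ N := by
            simpa only [Real.rpow_two] using rpow_le_tsum_rpow hp zero_le_two hc₀ ha k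
    · exact hN
  calc ∑ m ∈ T, (jb m ^ (-μ) + if m = k then jb m ^ (-ν) else 0) * ‖a m‖ ^ 2
      = ∑ m ∈ T, jb m ^ (-(μ + 2 * s₀)) * c m ^ 2 +
          ∑ m ∈ T, (if m = k then jb m ^ (-ν) else 0) * ‖a m‖ ^ 2 := by
        rw [← Finset.sum_add_distrib]
        exact Finset.sum_congr rfl fun m _ ↦ by rw [add_mul, jb_rpow_neg_mul_sq s₀ μ]
    _ ≤ C * N + N := add_le_add (hsum c hc₀ ha T) hdiag
    _ = (C + 1) * N := by ring

theorem exists_tsum_bilinearKernel_mul_norm_sq_le {r β γ κ : ℝ} (hp : 0 < p) (hβγ : β ≤ γ)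
    (hγ : 1 < γ) (hκ : 1 < κ) (hr : |r| ≤ κ) (hκβ : κ ≤ 2 * β) (hκs₀ : κ ≤ 2 * β + 2 * s₀)
    (hμ : 1 - 2 / p < 2 * β - |r| + 2 * s₀) :
    ∃ C : ℝ, 0 < C ∧ ∀ a : ℤ → E, Summable (fun m : ℤ ↦ jb m ^ (s₀ * p) * ‖a m‖ ^ p) →
      ∀ (k : ℤ) (τ : ℝ),
        Summable (fun nm : ℤ × ℤ ↦ bilinearKernel r β γ k τ nm.1 nm.2 * ‖a nm.2‖ ^ 2) ∧
          ∑' nm : ℤ × ℤ, bilinearKernel r β γ k τ nm.1 nm.2 * ‖a nm.2‖ ^ 2 ≤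
            C * (∑' m : ℤ, jb m ^ (s₀ * p) * ‖a m‖ ^ p) ^ (2 / p) := by
  obtain ⟨C₁, hC₁, hrow⟩ := exists_sum_bilinearKernel_le hβγ hγ hκ hr hκβ
  obtain ⟨C₂, hC₂, hcol⟩ := exists_sum_jb_rpow_neg_add_ite_mul_norm_sq_le (E := E) (s₀ := s₀)
    (μ := 2 * β - |r|) (ν := 2 * β - κ) hp (by linarith) hμ (by linarith)
  refine ⟨C₁ * C₂, by positivity, fun a ha k τ ↦ summable_and_tsum_le_of_sum_sum_le
    (fun nm ↦ mul_nonneg (bilinearKernel_nonneg _ _ _ _ _ _ _) (sq_nonneg _)) fun S T ↦ ?_⟩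
  calc ∑ m ∈ T, ∑ n ∈ S, bilinearKernel r β γ k τ n m * ‖a m‖ ^ 2
      ≤ ∑ m ∈ T, C₁ * ((jb m ^ (-(2 * β - |r|)) +
          if m = k then jb m ^ (-(2 * β - κ)) else 0) * ‖a m‖ ^ 2) := by
        gcongr with m
        rw [← Finset.sum_mul, ← mul_assoc]
        gcongr
        exact hrow k m τ S
    _ ≤ C₁ * (C₂ * (∑' m : ℤ, jb m ^ (s₀ * p) * ‖a m‖ ^ p) ^ (2 / p)) := by
        rw [← Finset.mul_sum]
        gcongr
        exact hcol a ha k T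
    _ = C₁ * C₂ * (∑' m : ℤ, jb m ^ (s₀ * p) * ‖a m‖ ^ p) ^ (2 / p) := (mul_assoc _ _ _).symm

end BilinearEstimate

theorem stmt2_general {E : Type*} [SeminormedAddCommGroup E] (s₀ p s : ℝ)
    (hs₀ : -(1 / 2) < s₀) (hp : 0 < p) (hs : |s| < 1) (hss₀ : |s| < 1 + s₀)
    (hsp : |s| < 1 / 2 + s₀ + 1 / p) :
    ∃ b₂ : ℝ, 1 / 2 < b₂ ∧ ∀ b : ℝ, 1 / 2 < b → b < b₂ →
      ∃ C : ℝ, 0 < C ∧ ∀ a : ℤ → E,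
        Summable (fun m : ℤ ↦ jb (m : ℝ) ^ (s₀ * p) * ‖a m‖ ^ p) →
        ∀ (k : ℤ) (τ : ℝ),
          Summable (fun nm : ℤ × ℤ ↦
              bilinearKernel (2 * s) (2 * (1 - b)) (2 * b) k τ nm.1 nm.2 * ‖a nm.2‖ ^ 2) ∧
            ∑' nm : ℤ × ℤ,
                bilinearKernel (2 * s) (2 * (1 - b)) (2 * b) k τ nm.1 nm.2 * ‖a nm.2‖ ^ 2 ≤
              C * (∑' m : ℤ, jb (m : ℝ) ^ (s₀ * p) * ‖a m‖ ^ p) ^ (2 / p) := by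
  -- All conditions on the exponent `2 * (1 - b)` are open and hold at its limit `1` as `b → 1 / 2`.
  obtain ⟨θ, hθ, hθ₁⟩ : ∃ θ, max (max (max (1 / 2) |s|) (max (1 / 2 - s₀) (|s| - s₀)))
      (1 / 2 - 1 / p + |s| - s₀) < θ ∧ θ < 1 :=
    exists_between (by simp only [max_lt_iff]; refine ⟨⟨⟨?_, ?_⟩, ?_, ?_⟩, ?_⟩ <;> linarith)
  simp only [max_lt_iff] at hθ
  obtain ⟨⟨⟨hθ₂, hθs⟩, hθs₀, hθss₀⟩, hθp⟩ := hθ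
  refine ⟨1 - θ / 2, by linarith, fun b hb hb₂ ↦ ?_⟩
  have hr : |2 * s| = 2 * |s| := by rw [abs_mul, abs_two]
  have hp2 : 2 / p = 2 * (1 / p) := by ring
  obtain ⟨hκ, hrκ⟩ : 1 / 2 < 2 * (1 - b) + min 0 s₀ ∧ |s| ≤ 2 * (1 - b) + min 0 s₀ := by
    rcases min_choice 0 s₀ with h | h <;> rw [h] <;> constructor <;> linarith
  exact exists_tsum_bilinearKernel_mul_norm_sq_le (κ := 2 * (2 * (1 - b)) + 2 * min 0 s₀) hp
    (by linarith) (by linarith) (by linarith) (by linarith) (by linarith [min_le_left 0 s₀])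
    (by linarith [min_le_right 0 s₀]) (by linarith)

/-- the core uniform bound in the bilinear estimate.  For `-1/2 < s₀ ≤ 0`,
real `p ≥ 2`, and `max(-1/2, -1/6 - s₀ - 1/p) < s ≤ 0`, there is `b₂ > 1/2` such that for
all `1/2 < b < b₂` there is `C > 0` with, for every `a : ℤ → ℂ` with
`∑_m ⟨m⟩^{s₀ p} |a_m|^p < ∞`, every `k ∈ ℤ` and `τ ∈ ℝ`,
`∑_{(n,m)} ⟨n⟩^{2s} ⟨n+m⟩^{-2s} |a_m|² ⟨-τ+(n+k)²+n²⟩^{-2(1-b)} ⟨τ-(n+k)²+m²+(n+m)²⟩^{-2b}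
  ≤ C (∑_m ⟨m⟩^{s₀ p} |a_m|^p)^{2/p}`. -/
theorem stmt2 (s₀ p s : ℝ) (hs₀l : -(1 / 2) < s₀) (hs₀u : s₀ ≤ 0) (hp : 2 ≤ p)
    (hsl : max (-(1 / 2)) (-(1 / 6) - s₀ - 1 / p) < s) (hsu : s ≤ 0) :
    ∃ b₂ : ℝ, 1 / 2 < b₂ ∧ ∀ b : ℝ, 1 / 2 < b → b < b₂ →
      ∃ C : ℝ, 0 < C ∧ ∀ a : ℤ → ℂ,
        Summable (fun m : ℤ => jb (m : ℝ) ^ (s₀ * p) * ‖a m‖ ^ p) →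
        ∀ (k : ℤ) (τ : ℝ),
          (∑' nm : ℤ × ℤ,
              jb (nm.1 : ℝ) ^ (2 * s) * jb ((nm.1 : ℝ) + (nm.2 : ℝ)) ^ (-(2 * s)) *
                ‖a nm.2‖ ^ 2 *
                jb (-τ + ((nm.1 : ℝ) + (k : ℝ)) ^ 2 + (nm.1 : ℝ) ^ 2) ^ (-(2 * (1 - b))) *
                jb (τ - ((nm.1 : ℝ) + (k : ℝ)) ^ 2 + (nm.2 : ℝ) ^ 2 +
                    ((nm.1 : ℝ) + (nm.2 : ℝ)) ^ 2) ^ (-(2 * b)))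
            ≤ C * (∑' m : ℤ, jb (m : ℝ) ^ (s₀ * p) * ‖a m‖ ^ p) ^ (2 / p) := by
  obtain ⟨hs, hsp⟩ := max_lt_iff.1 hsl
  have habs : |s| = -s := abs_of_nonpos hsu
  obtain ⟨b₂, hb₂, h⟩ := stmt2_general (E := ℂ) s₀ p s hs₀l (by linarith) (by linarith)
    (by linarith [one_div_le_one_div_of_le two_pos hp]) (by linarith)
  refine ⟨b₂, hb₂, fun b hb hbb₂ ↦ ?_⟩
  obtain ⟨C, hC, hle⟩ := h b hb hbb₂
  refine ⟨C, hC, fun a ha k τ ↦ (tsum_congr fun nm ↦ ?_).trans_le (hle a ha k τ).2⟩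
  unfold bilinearKernel outputModulation inputModulation
  ring
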